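/- Let d ≥ 2, ℓ ≥ 1 and 1 ≤ i ≤ d. The numbers of edges of the ℓ-pruned d-ary Fibonacci trees satisfy: (i) |E(P_{i,ℓ}(ℓ))| = ℓ·2^{i−1}; (ii) for every k > ℓ, |E(P_{i,ℓ}(k))| = 1 + Σ_{j=1}^{i−1} |E(P_{j,ℓ}(k))| + Σ_{j=i}^{d} |E(P_{j,ℓ}(k−1))|; and (iii) for every k ≥ ℓ, ℓ·F_d(d(k−ℓ)+i+1) ≤ |E(P_{i,ℓ}(k))| ≤ ℓ·F_d(d(k−ℓ)+i+2), where F_d denotes the d-ary Fibonacci numbers. -/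

import Mathlib

/-!
Indices `i`, `j` run from `0` to `d - 1`. The tree `S_i(k+1)` consists of its
top edge and `d` disjoint copies `S_j(k+1)` (`j < i`), `S_j(k)` (`j ≥ i`). A vertex other
than the root has the same descendants and the same number of children in its copy as in the
whole tree; only the root, which is also the root of the `i`-th
copy, gains children. Pruning therefore commutes with the decomposition, provided that one also
considers the pruning `pruned True` in which the root is exempt (`image_mem_pruned`), and this
gives a recursion for the numbers of edges (`card_pruned_true_succ`).

The root of `S_i(k)` has `(d-1)k` children. For `k ≥ ℓ` exempting it changes nothing, which gives
the recursion for `k > ℓ` (`card_pruned_succ`). For `k < ℓ` everything is pruned, or, if the root is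
exempt, exactly the `k` edges at the root survive. Hence
`|E(P_{i,ℓ}(ℓ))| = ℓ + ∑_{j<i} |E(P_{j,ℓ}(ℓ))|`, which sums to `ℓ·2^i` (`card_pruned_base`).

For the Fibonacci bounds, list the trees by `n = d(k-ℓ) + i`. The recursion then reads
`a(n) = 1 + a(n-1) + ⋯ + a(n-d)`, to be compared with the Fibonacci recursion. The lower bound is
immediate by induction; the upper bound follows from the stronger claim `a(n) + 1 ≤ ℓ F`, since
the `d ≥ 2` units gained on the right pay for the two extra units on the left
(`card_pruned_bounds`).
-/

open scoped Classical

/-- The edge set of the `d`-ary Fibonacci tree `S_i(k)` (with `i` zero-based: `SEdges d k i`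
is the tree `S_{i+1}(k)` of the paper).  Vertices are addressed by lists over `Fin d`:
the vertex `v_j` of the top edge is the root of the `j`-th copy, and the `j`-th copy
consists of the addresses starting with `j`.  The root of `S_i(k)` is `List.replicate k i`. -/
def SEdges (d : ℕ) [NeZero d] : (k : ℕ) → (i : Fin d) → Finset (Finset (List (Fin d)))
  | 0, _ => ∅
  | (k + 1), i =>
      insert
        (Finset.univ.image fun j : Fin d =>
          if j < i then j :: List.replicate (k + 1) j else j :: List.replicate k j)
        (Finset.univ.biUnion fun j : Fin d =>
          if _h : j < i then (SEdges d (k + 1) j).image fun e => e.image (List.cons j)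
          else (SEdges d k j).image fun e => e.image (List.cons j))
  termination_by k i => (k, (i : ℕ))

/-- The set of children of the vertex (address) `v` in the rooted tree `S_i(k)`. -/
def SChildren (d : ℕ) [NeZero d] :
    (k : ℕ) → (i : Fin d) → List (Fin d) → Finset (List (Fin d))
  | 0, _, _ => ∅
  | (k + 1), i, v =>
      (match v with
        | [] => (∅ : Finset (List (Fin d)))
        | j :: u =>
          if _h : j < i then (SChildren d (k + 1) j u).image (List.cons j)
          else (SChildren d k j u).image (List.cons j)) ∪
      (if v = List.replicate (k + 1) i then
        (Finset.univ.image fun j : Fin d =>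
          if j < i then j :: List.replicate (k + 1) j else j :: List.replicate k j) \ {v}
      else ∅)
  termination_by k i => (k, (i : ℕ))

/-- The edges of the `ℓ`-pruned tree `P_{i,ℓ}(k)`: the edges of `S_i(k)` that do not lie in
the induced subtree (descendants w.r.t. the child relation) rooted at a vertex of `S_i(k)`
with fewer than `(d-1)ℓ` children. -/
noncomputable def prunedSEdges (d : ℕ) [NeZero d] (k : ℕ) (i : Fin d) (ℓ : ℕ) :
    Finset (Finset (List (Fin d))) :=
  (SEdges d k i).filter fun e =>
    ¬ ∃ w ∈ (SEdges d k i).biUnion id, (SChildren d k i w).card < (d - 1) * ℓ ∧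
      ∀ v ∈ e, Relation.ReflTransGen (fun a b => b ∈ SChildren d k i a) w v

/-- d-ary Fibonacci numbers: `dFib d k = F_d(k)`, with `F_d(j) = 0` for `j ≤ 0`. -/
def dFib (d : ℕ) : ℕ → ℕ
  | 0 => 0
  | 1 => 1
  | (k + 2) => ∑ j ∈ Finset.range d, dFib d (k + 1 - j)
  termination_by k => k
  decreasing_by omega

/-! ### The Fibonacci numbers -/

section Fibonacci

variable {d : ℕ}

lemma dFib_add (hd : 2 ≤ d) (n : ℕ) :
    dFib d (n + d) = ∑ t ∈ Finset.range d, dFib d (n + t) := by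
  obtain ⟨m, hm⟩ : ∃ m, n + d = m + 2 := ⟨n + d - 2, by omega⟩
  rw [hm, dFib, ← Finset.sum_range_reflect]
  refine Finset.sum_congr rfl fun t ht => ?_
  have := Finset.mem_range.1 ht
  congr 1
  omega

lemma dFib_one (d : ℕ) : dFib d 1 = 1 := by rw [dFib]

lemma dFib_zero (d : ℕ) : dFib d 0 = 0 := by rw [dFib]

lemma dFib_add_le (hd : 2 ≤ d) (n : ℕ) : dFib d (n + 1) + dFib d n ≤ dFib d (n + 2) := by
  rw [dFib.eq_3]
  obtain ⟨c, rfl⟩ : ∃ c, d = c + 2 := ⟨d - 2, by omega⟩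
  rw [Finset.sum_range_succ', Finset.sum_range_succ']
  simp only [Nat.sub_zero, zero_add, Nat.add_sub_cancel]
  omega

lemma dFib_pos (hd : 2 ≤ d) (n : ℕ) : 1 ≤ dFib d (n + 1) := by
  induction n with
  | zero => rw [zero_add, dFib_one]
  | succ n ih => exact ih.trans ((Nat.le_add_right _ _).trans (dFib_add_le hd n))

lemma dFib_small {n : ℕ} (hn : n < d) : dFib d (n + 2) = 2 ^ n := by
  induction n using Nat.strong_induction_on with
  | _ n ih =>
    have h1 : dFib d (n + 2) = ∑ t ∈ Finset.range (n + 1), dFib d (t + 1) := by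
      rw [dFib, ← Finset.sum_subset (Finset.range_mono (show n + 1 ≤ d from hn)),
        ← Finset.sum_range_reflect]
      · refine Finset.sum_congr rfl fun t ht => ?_
        have := Finset.mem_range.1 ht
        congr 1
        omega
      · intro t _ ht
        have : n + 1 ≤ t := by simpa using ht
        rw [Nat.sub_eq_zero_of_le this, dFib_zero]
    rw [h1, Finset.sum_range_succ', zero_add, dFib_one,
      Finset.sum_congr rfl fun t ht =>
        ih t (Finset.mem_range.1 ht) ((Finset.mem_range.1 ht).trans hn),
      Nat.geomSum_eq le_rfl]
    have hp : 1 ≤ 2 ^ n := Nat.one_le_two_pow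
    simp only [Nat.add_one_sub_one, Nat.div_one]
    omega

/-- A window of length `d` starting at `i` meets every residue class modulo `d` once. -/
lemma sum_window (i : Fin d) (f : ℕ → ℕ) :
    ∑ t ∈ Finset.range d, f (i + t) =
      ∑ j : Fin d, f (if j < i then d + j else j) := by
  have h : ∀ m ≤ d, ∑ t ∈ Finset.range d, f (m + t) =
      ∑ t ∈ Finset.range d, f (if t < m then d + t else t) := by
    intro m hm
    have e1 : ∑ t ∈ Finset.range d, f (m + t) = ∑ t ∈ Finset.Ico m (d + m), f t := by
      rw [Finset.sum_Ico_eq_sum_range, Nat.add_sub_cancel]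
    have e2 : ∑ t ∈ Finset.range m, f (d + t) = ∑ t ∈ Finset.Ico d (d + m), f t := by
      rw [Finset.sum_Ico_eq_sum_range, Nat.add_sub_cancel_left]
    rw [e1, ← Finset.sum_Ico_consecutive f hm (Nat.le_add_right d m), ← e2,
      ← Finset.sum_range_add_sum_Ico _ hm, add_comm]
    congr 1
    · refine Finset.sum_congr rfl fun t ht => ?_
      rw [if_pos (Finset.mem_range.1 ht)]
    · refine Finset.sum_congr rfl fun t ht => ?_
      rw [if_neg (not_lt.2 (Finset.mem_Ico.1 ht).1)]
  rw [h i i.2.le, Finset.sum_range]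
  rfl

/-! ### The recursive structure of `S_i(k)` -/

/-- The level of the `j`-th copy inside `S_i(k+1)`: the copy is `S_j(k+1)` if `j < i`, and
`S_j(k)` otherwise. -/
def copyLevel (k : ℕ) (i j : Fin d) : ℕ := if j < i then k + 1 else k

/-- The top edge of `S_i(k+1)`. -/
def topEdge (k : ℕ) (i : Fin d) : Finset (List (Fin d)) :=
  Finset.univ.image fun j : Fin d => j :: List.replicate (copyLevel k i j) j

lemma topEdge_eq (k : ℕ) (i : Fin d) :
    (Finset.univ.image fun j : Fin d =>
      if j < i then j :: List.replicate (k + 1) j else j :: List.replicate k j) = topEdge k i := by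
  unfold topEdge copyLevel
  congr 1
  funext j
  split_ifs <;> rfl

lemma copyLevel_self (k : ℕ) (i : Fin d) : copyLevel k i i = k := by
  simp [copyLevel]

lemma mem_topEdge {k : ℕ} {i j : Fin d} {u : List (Fin d)} :
    j :: u ∈ topEdge k i ↔ u = List.replicate (copyLevel k i j) j := by
  simp only [topEdge, Finset.mem_image, Finset.mem_univ, true_and, List.cons.injEq]
  constructor
  · rintro ⟨a, rfl, rfl⟩
    rfl
  · rintro rfl
    exact ⟨j, rfl, rfl⟩

lemma root_mem_topEdge (k : ℕ) (i : Fin d) : List.replicate (k + 1) i ∈ topEdge k i := by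
  rw [List.replicate_succ, mem_topEdge, copyLevel_self]

lemma cons_eq_root {k : ℕ} {i j : Fin d} {u : List (Fin d)} :
    j :: u = List.replicate (k + 1) i ↔
      j = i ∧ u = List.replicate (copyLevel k i j) j := by
  rw [List.replicate_succ, List.cons.injEq]
  constructor
  · rintro ⟨rfl, rfl⟩
    exact ⟨rfl, by rw [copyLevel_self]⟩
  · rintro ⟨rfl, h⟩
    exact ⟨rfl, by rwa [copyLevel_self] at h⟩

lemma card_topEdge (k : ℕ) (i : Fin d) : (topEdge k i).card = d := by
  unfold topEdge
  rw [Finset.card_image_of_injective]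
  · simp
  · intro a b h
    exact (List.cons.inj h).1

/-- With `n = d q + i` attached to `S_i(ℓ + q)`, the copies in `S_i(ℓ + q + 1)` are attached to
the `d` consecutive integers preceding `d (q + 1) + i`. -/
lemma dFib_copies (hd : 2 ≤ d) (q c : ℕ) (i : Fin d) :
    dFib d (d * (q + 1) + i + c) = ∑ j : Fin d, dFib d (d * copyLevel q i j + j + c) := by
  rw [show d * (q + 1) + i + c = (d * q + i + c) + d by ring, dFib_add hd]
  have h := sum_window i (fun x => dFib d (d * q + c + x))
  rw [Finset.sum_congr rfl fun t _ => show dFib d (d * q + i + c + t) =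
    dFib d (d * q + c + (i + t)) by congr 1; ring, h]
  refine Finset.sum_congr rfl fun j _ => ?_
  unfold copyLevel
  split_ifs <;> congr 1 <;> ring

lemma sum_copyLevel (i : Fin d) (k : ℕ) (f : ℕ → Fin d → ℕ) :
    ∑ j : Fin d, f (copyLevel k i j) j =
      (∑ j ∈ Finset.univ.filter fun j : Fin d => j < i, f (k + 1) j) +
        ∑ j ∈ Finset.univ.filter fun j : Fin d => i ≤ j, f k j := by
  rw [← Finset.sum_filter_add_sum_filter_not Finset.univ (fun j : Fin d => j < i)]
  simp only [not_lt]
  congr 1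
  · refine Finset.sum_congr rfl fun j hj => ?_
    rw [copyLevel, if_pos (Finset.mem_filter.1 hj).2]
  · refine Finset.sum_congr rfl fun j hj => ?_
    rw [copyLevel, if_neg (not_lt.2 (Finset.mem_filter.1 hj).2)]

lemma sum_fin_lt (i : Fin d) (f : ℕ → ℕ) :
    ∑ j ∈ Finset.univ.filter (fun j : Fin d => j < i), f j = ∑ t ∈ Finset.range i, f t := by
  refine Finset.sum_bij (fun j _ => (j : ℕ)) ?_ ?_ ?_ ?_
  · intro j hj
    exact Finset.mem_range.2 (Finset.mem_filter.1 hj).2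
  · intro a _ b _ h
    exact Fin.ext h
  · intro t ht
    have ht' := Finset.mem_range.1 ht
    exact ⟨⟨t, ht'.trans i.2⟩, Finset.mem_filter.2 ⟨Finset.mem_univ _, ht'⟩, rfl⟩
  · intro _ _
    rfl

variable [NeZero d]

lemma SEdges_zero (i : Fin d) : SEdges d 0 i = ∅ := by
  rw [SEdges]

lemma SEdges_succ (k : ℕ) (i : Fin d) :
    SEdges d (k + 1) i = insert (topEdge k i) (Finset.univ.biUnion fun j : Fin d =>
      (SEdges d (copyLevel k i j) j).image fun e => e.image (List.cons j)) := by
  rw [SEdges, topEdge_eq]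
  congr 2
  funext j
  unfold copyLevel
  split_ifs <;> rfl

lemma SChildren_cons (k : ℕ) (i j : Fin d) (u : List (Fin d)) :
    SChildren d (k + 1) i (j :: u) =
      (SChildren d (copyLevel k i j) j u).image (List.cons j) ∪
        (if j :: u = List.replicate (k + 1) i then topEdge k i \ {j :: u} else ∅) := by
  rw [SChildren, topEdge_eq]
  congr 1
  unfold copyLevel
  split_ifs <;> rfl

lemma SChildren_nil (k : ℕ) (i : Fin d) : SChildren d k i [] = ∅ := by
  cases k with
  | zero => rw [SChildren]
  | succ k => rw [SChildren]; simp [List.replicate_succ]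

/-- The root has no parent. -/
lemma root_notMem_children (k : ℕ) (i : Fin d) (v : List (Fin d)) :
    List.replicate k i ∉ SChildren d k i v := by
  induction k generalizing v with
  | zero => rw [SChildren]; simp
  | succ k ih =>
    cases v with
    | nil => simp [SChildren_nil]
    | cons j u =>
      rw [SChildren_cons, Finset.mem_union, not_or]
      constructor
      · intro h
        obtain ⟨x, hx, hxe⟩ := Finset.mem_image.1 h
        obtain ⟨rfl, rfl⟩ := cons_eq_root.1 hxe
        rw [copyLevel_self] at hx
        exact ih _ hx
      · split_ifs with h
        · rw [h]; simp
        · simp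

/-- Each of the `k` edges at the root of `S_i(k)` contributes `d - 1` children. -/
lemma card_children_root (k : ℕ) (i : Fin d) :
    (SChildren d k i (List.replicate k i)).card = (d - 1) * k := by
  induction k with
  | zero => rw [SChildren]; simp
  | succ k ih =>
    rw [List.replicate_succ, SChildren_cons, if_pos (by rw [List.replicate_succ]),
      Finset.card_union_of_disjoint, copyLevel_self, Finset.card_image_of_injective, ih,
      Finset.card_sdiff_of_subset, card_topEdge, Finset.card_singleton]
    · ring
    · rw [Finset.singleton_subset_iff, ← List.replicate_succ]
      exact root_mem_topEdge k i
    · exact List.cons_injective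
    · rw [Finset.disjoint_left]
      rintro _ hx hy
      obtain ⟨x, -, rfl⟩ := Finset.mem_image.1 hx
      rw [Finset.mem_sdiff, mem_topEdge, copyLevel_self] at hy
      exact hy.2 (by simp [hy.1])

/-! ### Descendants -/

/-- `Desc k i a b`: the vertex `b` is a descendant of `a` (possibly `a` itself) in `S_i(k)`. -/
def Desc (k : ℕ) (i : Fin d) : List (Fin d) → List (Fin d) → Prop :=
  Relation.ReflTransGen (fun a b => b ∈ SChildren d k i a)

lemma desc_root {k : ℕ} {i : Fin d} {w : List (Fin d)}
    (h : Desc k i w (List.replicate k i)) : w = List.replicate k i := by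
  rcases Relation.ReflTransGen.cases_tail h with h | ⟨c, -, h⟩
  · exact h.symm
  · exact absurd h (root_notMem_children k i c)

lemma Desc.lift {k : ℕ} {i j : Fin d} {u v : List (Fin d)}
    (h : Desc (copyLevel k i j) j u v) : Desc (k + 1) i (j :: u) (j :: v) := by
  refine Relation.ReflTransGen.lift (List.cons j) ?_ _ _ h
  intro a b hab
  change j :: b ∈ SChildren d (k + 1) i (j :: a)
  rw [SChildren_cons]
  exact Finset.mem_union_left _ (Finset.mem_image_of_mem _ hab)

/-- A vertex other than the root of `S_i(k+1)` has the same descendants as in its copy. -/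
lemma Desc.of_cons {k : ℕ} {i j : Fin d} {u v : List (Fin d)}
    (hu : j :: u ≠ List.replicate (k + 1) i) (h : Desc (k + 1) i (j :: u) v) :
    ∃ v', v = j :: v' ∧ Desc (copyLevel k i j) j u v' := by
  induction h with
  | refl => exact ⟨u, rfl, Relation.ReflTransGen.refl⟩
  | @tail b c hb hc ih =>
    obtain ⟨b', rfl, hb'⟩ := ih
    have hne : j :: b' ≠ List.replicate (k + 1) i := by
      intro hr
      exact hu (desc_root (hr ▸ hb) )
    rw [SChildren_cons, if_neg hne, Finset.union_empty] at hc
    obtain ⟨c', hc', rfl⟩ := Finset.mem_image.1 hc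
    exact ⟨c', rfl, hb'.tail hc'⟩

/-- Every vertex is a descendant of the root. -/
lemma desc_of_mem_edge : ∀ (k : ℕ) (i : Fin d), ∀ e ∈ SEdges d k i, ∀ v ∈ e,
    Desc k i (List.replicate k i) v
  | 0, i => by simp [SEdges_zero]
  | k + 1, i => by
    have top : ∀ j : Fin d, Desc (k + 1) i (List.replicate (k + 1) i)
        (j :: List.replicate (copyLevel k i j) j) := by
      intro j
      by_cases hj : j :: List.replicate (copyLevel k i j) j = List.replicate (k + 1) i
      · rw [hj]; exact Relation.ReflTransGen.refl
      · refine Relation.ReflTransGen.single ?_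
        have hr := SChildren_cons k i i (List.replicate k i)
        rw [← List.replicate_succ, if_pos rfl] at hr
        rw [hr]
        refine Finset.mem_union_right _ (Finset.mem_sdiff.2 ⟨mem_topEdge.2 rfl, ?_⟩)
        simpa using hj
    intro e he v hv
    rw [SEdges_succ, Finset.mem_insert, Finset.mem_biUnion] at he
    rcases he with rfl | ⟨j, -, he⟩
    · obtain ⟨j, -, rfl⟩ := Finset.mem_image.1 hv
      exact top j
    · obtain ⟨e', he', rfl⟩ := Finset.mem_image.1 he
      obtain ⟨v', hv', rfl⟩ := Finset.mem_image.1 hv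
      have hrec : Desc (copyLevel k i j) j (List.replicate (copyLevel k i j) j) v' := by
        by_cases hji : j < i
        · have hK : copyLevel k i j = k + 1 := if_pos hji
          rw [hK] at he' ⊢
          exact desc_of_mem_edge (k + 1) j e' he' v' hv'
        · have hK : copyLevel k i j = k := if_neg hji
          rw [hK] at he' ⊢
          exact desc_of_mem_edge k j e' he' v' hv'
      exact (top j).trans hrec.lift
  termination_by k i => (k, (i : ℕ))

lemma edge_nonempty {k : ℕ} {i : Fin d} {e : Finset (List (Fin d))}
    (he : e ∈ SEdges d k i) : e.Nonempty := by
  induction k using Nat.strong_induction_on generalizing i e with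
  | _ k ihk =>
    induction i using WellFoundedLT.induction generalizing e with
    | _ i ihi =>
      cases k with
      | zero => simp [SEdges_zero] at he
      | succ k =>
        rw [SEdges_succ, Finset.mem_insert, Finset.mem_biUnion] at he
        rcases he with rfl | ⟨j, -, he⟩
        · exact ⟨_, root_mem_topEdge k i⟩
        · obtain ⟨e', he', rfl⟩ := Finset.mem_image.1 he
          refine Finset.Nonempty.image ?_ _
          by_cases hji : j < i
          · rw [show copyLevel k i j = k + 1 from if_pos hji] at he'
            exact ihi j hji he'
          · rw [show copyLevel k i j = k from if_neg hji] at he'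
            exact ihk k (Nat.lt_succ_self k) he'

/-! ### Pruning -/

/-- The edge `e` of `S_i(k)` is removed by the pruning. If `x` holds, then the root of `S_i(k)`
is exempt, i.e. it does not cause the removal of edges even if it has few children. -/
def Removed (x : Prop) (k : ℕ) (i : Fin d) (ℓ : ℕ) (e : Finset (List (Fin d))) : Prop :=
  ∃ w ∈ (SEdges d k i).biUnion id, (x → w ≠ List.replicate k i) ∧
    (SChildren d k i w).card < (d - 1) * ℓ ∧ ∀ v ∈ e, Desc k i w v

/-- The edges of `S_i(k)` surviving the pruning; the root is exempt if `x` holds. -/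
noncomputable def pruned (x : Prop) (k : ℕ) (i : Fin d) (ℓ : ℕ) :
    Finset (Finset (List (Fin d))) :=
  (SEdges d k i).filter fun e => ¬ Removed x k i ℓ e

lemma mem_pruned {x : Prop} {k : ℕ} {i : Fin d} {ℓ : ℕ} {e : Finset (List (Fin d))} :
    e ∈ pruned x k i ℓ ↔ e ∈ SEdges d k i ∧ ¬ Removed x k i ℓ e := by
  unfold pruned
  exact Finset.mem_filter

lemma prunedSEdges_eq (k : ℕ) (i : Fin d) (ℓ : ℕ) :
    prunedSEdges d k i ℓ = pruned False k i ℓ := by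
  ext e
  rw [mem_pruned, prunedSEdges, Finset.mem_filter]
  simp [Removed, Desc]

/-- The root of `S_i(k)` has at least `(d-1)ℓ` children if `ℓ ≤ k`, so exempting it is
immaterial. -/
lemma pruned_false_eq_true {k ℓ : ℕ} (h : ℓ ≤ k) (i : Fin d) :
    pruned False k i ℓ = pruned True k i ℓ := by
  ext e
  rw [mem_pruned, mem_pruned]
  refine and_congr_right fun _ => not_congr (exists_congr fun w => and_congr_right fun _ => ?_)
  constructor
  · rintro ⟨-, hc, hv⟩
    refine ⟨?_, hc, hv⟩
    rintro - rfl
    rw [card_children_root] at hc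
    exact absurd (Nat.mul_le_mul_left (d - 1) h) (not_le.2 hc)
  · rintro ⟨-, hc, hv⟩
    exact ⟨False.elim, hc, hv⟩

/-- If `k < ℓ` then the root of `S_i(k)` has too few children, and everything is removed. -/
lemma pruned_false_eq_empty (hd : 2 ≤ d) {k ℓ : ℕ} (h : k < ℓ) (i : Fin d) :
    pruned False k i ℓ = ∅ := by
  refine Finset.eq_empty_of_forall_notMem fun e hp => ?_
  obtain ⟨he, hn⟩ := mem_pruned.1 hp
  refine hn ?_
  refine ⟨List.replicate k i, ?_, False.elim, ?_, desc_of_mem_edge k i e he⟩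
  · cases k with
    | zero => simp [SEdges_zero] at he
    | succ k =>
      rw [Finset.mem_biUnion, SEdges_succ]
      exact ⟨topEdge k i, Finset.mem_insert_self _ _, root_mem_topEdge k i⟩
  · rw [card_children_root]
    exact Nat.mul_lt_mul_of_pos_left h (by omega)

lemma topEdge_mem_pruned (k : ℕ) (i : Fin d) (ℓ : ℕ) :
    topEdge k i ∈ pruned True (k + 1) i ℓ := by
  rw [mem_pruned, SEdges_succ]
  refine ⟨Finset.mem_insert_self _ _, ?_⟩
  rintro ⟨w, -, hw, -, hv⟩
  exact hw trivial (desc_root (hv _ (root_mem_topEdge k i)))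

/-- Inside the `j`-th copy, the pruning of `S_i(k+1)` with exempt root is the pruning of that
copy, whose root is exempt precisely when it is the root of the whole tree. -/
lemma image_mem_pruned {k : ℕ} {i j : Fin d} {ℓ : ℕ} {e : Finset (List (Fin d))}
    (he : e ∈ SEdges d (copyLevel k i j) j) :
    e.image (List.cons j) ∈ pruned True (k + 1) i ℓ ↔
      e ∈ pruned (j = i) (copyLevel k i j) j ℓ := by
  have hmem : e.image (List.cons j) ∈ SEdges d (k + 1) i := by
    rw [SEdges_succ]
    exact Finset.mem_insert_of_mem
      (Finset.mem_biUnion.2 ⟨j, Finset.mem_univ _, Finset.mem_image_of_mem _ he⟩)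
  simp only [mem_pruned, he, hmem, true_and, Removed]
  refine not_congr ?_
  have hcard : ∀ u : List (Fin d), j :: u ≠ List.replicate (k + 1) i →
      (SChildren d (k + 1) i (j :: u)).card = (SChildren d (copyLevel k i j) j u).card := by
    intro u hu
    rw [SChildren_cons, if_neg hu, Finset.union_empty,
      Finset.card_image_of_injective _ List.cons_injective]
  constructor
  · rintro ⟨w, hw, hr, hc, hv⟩
    have hr := hr trivial
    obtain ⟨v₀, hv₀⟩ := edge_nonempty he
    rw [Finset.mem_biUnion] at hw
    obtain ⟨f, hf, hwf⟩ := hw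
    have hw' : ∃ j' u, w = j' :: u ∧ (u = List.replicate (copyLevel k i j') j' ∨
        u ∈ (SEdges d (copyLevel k i j') j').biUnion id) := by
      rw [SEdges_succ, Finset.mem_insert, Finset.mem_biUnion] at hf
      rcases hf with rfl | ⟨j', -, hf⟩
      · obtain ⟨j', -, rfl⟩ := Finset.mem_image.1 hwf
        exact ⟨j', _, rfl, Or.inl rfl⟩
      · obtain ⟨f', hf', rfl⟩ := Finset.mem_image.1 hf
        obtain ⟨u, hu, rfl⟩ := Finset.mem_image.1 hwf
        exact ⟨j', u, rfl, Or.inr (Finset.mem_biUnion.2 ⟨f', hf', hu⟩)⟩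
    obtain ⟨j', u, rfl, hu⟩ := hw'
    have hd' : ∀ v ∈ e, j = j' ∧ Desc (copyLevel k i j') j' u v := by
      intro v hve
      obtain ⟨v', hv', hD⟩ := (hv (j :: v) (Finset.mem_image_of_mem _ hve)).of_cons hr
      obtain ⟨rfl, rfl⟩ := List.cons.inj hv'
      exact ⟨rfl, hD⟩
    obtain rfl := (hd' v₀ hv₀).1
    refine ⟨u, ?_, ?_, ?_, fun v hve => (hd' v hve).2⟩
    · rcases hu with rfl | hu
      -- A copy with an edge `e` has positive level, so its root lies on its top edge.
      · generalize copyLevel k i j = m at he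
        cases m with
        | zero => simp [SEdges_zero] at he
        | succ m =>
          rw [Finset.mem_biUnion, SEdges_succ]
          exact ⟨topEdge m j, Finset.mem_insert_self _ _, root_mem_topEdge m j⟩
      · exact hu
    · intro hji hur
      exact hr (cons_eq_root.2 ⟨hji, hur⟩)
    · rwa [hcard u hr] at hc
  · rintro ⟨u, hu, hr, hc, hv⟩
    have hr' : j :: u ≠ List.replicate (k + 1) i := by
      intro h
      obtain ⟨h1, h2⟩ := cons_eq_root.1 h
      exact hr h1 h2
    refine ⟨j :: u, ?_, fun _ => hr', ?_, ?_⟩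
    · obtain ⟨f, hf, huf⟩ := Finset.mem_biUnion.1 hu
      refine Finset.mem_biUnion.2 ⟨f.image (List.cons j), ?_, Finset.mem_image_of_mem _ huf⟩
      rw [SEdges_succ]
      exact Finset.mem_insert_of_mem
        (Finset.mem_biUnion.2 ⟨j, Finset.mem_univ _, Finset.mem_image_of_mem _ hf⟩)
    · rwa [hcard u hr']
    · intro v hve
      obtain ⟨v', hv', rfl⟩ := Finset.mem_image.1 hve
      exact (hv v' hv').lift

lemma pruned_true_succ (k : ℕ) (i : Fin d) (ℓ : ℕ) :
    pruned True (k + 1) i ℓ = insert (topEdge k i) (Finset.univ.biUnion fun j : Fin d =>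
      (pruned (j = i) (copyLevel k i j) j ℓ).image fun e => e.image (List.cons j)) := by
  ext e
  rw [Finset.mem_insert, Finset.mem_biUnion]
  constructor
  · intro he
    have he' : e ∈ SEdges d (k + 1) i := (mem_pruned.1 he).1
    rw [SEdges_succ, Finset.mem_insert, Finset.mem_biUnion] at he'
    refine he'.imp_right ?_
    rintro ⟨j, hj, hm⟩
    obtain ⟨f, hf, rfl⟩ := Finset.mem_image.1 hm
    exact ⟨j, hj, Finset.mem_image_of_mem _ ((image_mem_pruned hf).1 he)⟩
  · rintro (rfl | ⟨j, -, hm⟩)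
    · exact topEdge_mem_pruned k i ℓ
    · obtain ⟨f, hf, rfl⟩ := Finset.mem_image.1 hm
      exact (image_mem_pruned (mem_pruned.1 hf).1).2 hf

lemma card_pruned_true_succ (hd : 2 ≤ d) (k : ℕ) (i : Fin d) (ℓ : ℕ) :
    (pruned True (k + 1) i ℓ).card =
      1 + ∑ j : Fin d, (pruned (j = i) (copyLevel k i j) j ℓ).card := by
  rw [pruned_true_succ, Finset.card_insert_of_notMem, Finset.card_biUnion, add_comm]
  · congr 1
    refine Finset.sum_congr rfl fun j _ => ?_
    exact Finset.card_image_of_injective _ (Finset.image_injective List.cons_injective)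
  · intro a _ b _ hab
    refine Finset.disjoint_left.2 ?_
    intro e ha hb
    obtain ⟨f, hf, rfl⟩ := Finset.mem_image.1 ha
    obtain ⟨g, -, hg⟩ := Finset.mem_image.1 hb
    obtain ⟨v, hv⟩ := edge_nonempty (mem_pruned.1 hf).1
    have hv' : a :: v ∈ g.image (List.cons b) := by
      have hg' : g.image (List.cons b) = f.image (List.cons a) := hg
      rw [hg']; exact Finset.mem_image_of_mem _ hv
    obtain ⟨w, -, hw⟩ := Finset.mem_image.1 hv'
    exact hab (List.cons.inj hw).1.symm
  · intro h
    obtain ⟨a, -, ha⟩ := Finset.mem_biUnion.1 h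
    obtain ⟨f, -, hf⟩ := Finset.mem_image.1 ha
    have hf' : f.image (List.cons a) = topEdge k i := hf
    -- As `d ≥ 2`, the top edge also meets a copy other than the `a`-th one.
    have : Nontrivial (Fin d) := Fin.nontrivial_iff_two_le.2 hd
    obtain ⟨b, hb⟩ := exists_ne a
    have hm : b :: List.replicate (copyLevel k i b) b ∈ f.image (List.cons a) := by
      rw [hf']; exact mem_topEdge.2 rfl
    obtain ⟨w, -, hw⟩ := Finset.mem_image.1 hm
    exact hb (List.cons.inj hw).1.symm

/-! ### Counting edges -/

/-- If `k < ℓ` and the root is exempt, exactly the `k` edges at the root survive. -/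
lemma card_pruned_true_of_lt (hd : 2 ≤ d) {k ℓ : ℕ} (h : k < ℓ) (i : Fin d) :
    (pruned True k i ℓ).card = k := by
  induction k with
  | zero => simp [pruned, SEdges_zero]
  | succ k ih =>
    rw [card_pruned_true_succ hd, Finset.sum_eq_single i]
    · rw [copyLevel_self, eq_self_iff_true, ih (by omega), add_comm]
    · intro j _ hj
      rw [eq_false hj, pruned_false_eq_empty hd, Finset.card_empty]
      unfold copyLevel
      split_ifs <;> omega
    · simp

lemma card_pruned_succ (hd : 2 ≤ d) {k ℓ : ℕ} (h : ℓ ≤ k) (i : Fin d) :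
    (pruned False (k + 1) i ℓ).card =
      1 + ∑ j : Fin d, (pruned False (copyLevel k i j) j ℓ).card := by
  rw [pruned_false_eq_true (by omega), card_pruned_true_succ hd]
  congr 1
  refine Finset.sum_congr rfl fun j _ => ?_
  by_cases hj : j = i
  · subst hj
    rw [copyLevel_self, eq_self_iff_true, pruned_false_eq_true h]
  · rw [eq_false hj]

lemma card_pruned_base (hd : 2 ≤ d) {ℓ : ℕ} (hℓ : 1 ≤ ℓ) (i : Fin d) :
    (pruned False ℓ i ℓ).card = ℓ * 2 ^ (i : ℕ) := by
  induction i using WellFoundedLT.induction with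
  | _ i ih =>
    obtain ⟨m, rfl⟩ : ∃ m, ℓ = m + 1 := ⟨ℓ - 1, by omega⟩
    rw [pruned_false_eq_true le_rfl, card_pruned_true_succ hd]
    -- The copy containing the root keeps its `ℓ - 1` root edges, the copies `j > i` keep nothing.
    have key : ∀ j : Fin d, (pruned (j = i) (copyLevel m i j) j (m + 1)).card =
        (if j = i then m else 0) + if j < i then (m + 1) * 2 ^ (j : ℕ) else 0 := by
      intro j
      rcases lt_trichotomy j i with h | rfl | h
      · rw [if_neg h.ne, if_pos h, eq_false h.ne, copyLevel, if_pos h, ← ih j h, zero_add]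
      · rw [if_pos rfl, if_neg (lt_irrefl j), copyLevel_self, eq_self_iff_true,
          card_pruned_true_of_lt hd (Nat.lt_succ_self m), add_zero]
      · rw [if_neg h.ne', if_neg h.not_gt, eq_false h.ne', copyLevel, if_neg h.not_gt,
          pruned_false_eq_empty hd (Nat.lt_succ_self m), Finset.card_empty]
    rw [Finset.sum_congr rfl fun j _ => key j, Finset.sum_add_distrib, ← Finset.sum_filter,
      ← Finset.sum_filter, sum_fin_lt i (fun t => (m + 1) * 2 ^ t), ← Finset.mul_sum,
      Nat.geomSum_eq le_rfl]
    have hp : 1 ≤ 2 ^ (i : ℕ) := Nat.one_le_two_pow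
    obtain ⟨q, hq⟩ := Nat.exists_eq_add_of_le hp
    rw [hq]
    simp [Finset.filter_eq']
    ring

/-- The upper bound is strict; the slack of `1` in each of the `d ≥ 2` copies absorbs the top
edge in the recursion. -/
lemma card_pruned_bounds (hd : 2 ≤ d) {ℓ : ℕ} (hℓ : 1 ≤ ℓ) : ∀ (q : ℕ) (i : Fin d),
    ℓ * dFib d (d * q + i + 2) ≤ (pruned False (ℓ + q) i ℓ).card ∧
      (pruned False (ℓ + q) i ℓ).card + 1 ≤ ℓ * dFib d (d * q + i + 3) := by
  intro q
  induction q with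
  | zero =>
    intro i
    rw [add_zero, card_pruned_base hd hℓ, mul_zero, zero_add, dFib_small i.2]
    refine ⟨le_rfl, ?_⟩
    have h : dFib d (i + 2) + dFib d (i + 1) ≤ dFib d (i + 3) := dFib_add_le hd (i + 1)
    rw [dFib_small i.2] at h
    have h' := dFib_pos hd i
    calc ℓ * 2 ^ (i : ℕ) + 1 ≤ ℓ * (2 ^ (i : ℕ) + 1) := by rw [mul_add]; omega
      _ ≤ _ := Nat.mul_le_mul_left _ (by omega)
  | succ q ihq =>
    intro i
    induction i using WellFoundedLT.induction with
    | _ i ihi =>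
      rw [← add_assoc, card_pruned_succ hd (Nat.le_add_right ℓ q), dFib_copies hd, dFib_copies hd,
        Finset.mul_sum, Finset.mul_sum]
      have key : ∀ j : Fin d,
          ℓ * dFib d (d * copyLevel q i j + j + 2) ≤
              (pruned False (copyLevel (ℓ + q) i j) j ℓ).card ∧
            (pruned False (copyLevel (ℓ + q) i j) j ℓ).card + 1 ≤
              ℓ * dFib d (d * copyLevel q i j + j + 3) := by
        intro j
        unfold copyLevel
        split_ifs with h
        · exact ihi j h
        · exact ihq j
      constructor
      · exact (Finset.sum_le_sum fun j _ => (key j).1).trans (Nat.le_add_left _ _)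
      · have h := Finset.sum_le_sum fun j (_ : j ∈ Finset.univ) => (key j).2
        rw [Finset.sum_add_distrib, Finset.sum_const, Finset.card_univ, Fintype.card_fin,
          smul_eq_mul, mul_one] at h
        omega

end Fibonacci

theorem stmt16 (d : ℕ) (hd : 2 ≤ d) (ℓ : ℕ) (hℓ : 1 ≤ ℓ) :
    haveI : NeZero d := ⟨by omega⟩
    ∀ i : Fin d,
      -- (i)  |E(P_{i,ℓ}(ℓ))| = ℓ·2^{i−1}   (`i` is zero-based, so the exponent is `i`)
      ((prunedSEdges d ℓ i ℓ).card = ℓ * 2 ^ (i : ℕ)) ∧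
      -- (ii) the recursion for k > ℓ
      (∀ k : ℕ, ℓ < k →
        (prunedSEdges d k i ℓ).card =
          1 + (∑ j ∈ Finset.univ.filter fun j : Fin d => j < i,
                (prunedSEdges d k j ℓ).card) +
            ∑ j ∈ Finset.univ.filter fun j : Fin d => i ≤ j,
              (prunedSEdges d (k - 1) j ℓ).card) ∧
      -- (iii) ℓ·F_d(d(k−ℓ)+i+1) ≤ |E(P_{i,ℓ}(k))| ≤ ℓ·F_d(d(k−ℓ)+i+2)  (1-based `i`)
      (∀ k : ℕ, ℓ ≤ k →
        ℓ * dFib d (d * (k - ℓ) + (i : ℕ) + 2) ≤ (prunedSEdges d k i ℓ).card ∧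
          (prunedSEdges d k i ℓ).card ≤ ℓ * dFib d (d * (k - ℓ) + (i : ℕ) + 3)) := by
  have : NeZero d := ⟨by omega⟩
  intro i
  simp only [prunedSEdges_eq]
  refine ⟨card_pruned_base hd hℓ i, ?_, ?_⟩
  · intro k hk
    obtain ⟨m, rfl⟩ : ∃ m, k = m + 1 := ⟨k - 1, by omega⟩
    rw [card_pruned_succ hd (by omega), sum_copyLevel i m fun k j => (pruned False k j ℓ).card,
      Nat.add_sub_cancel, add_assoc]
  · intro k hk
    obtain ⟨q, rfl⟩ := Nat.exists_eq_add_of_le hk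
    rw [Nat.add_sub_cancel_left]
    obtain ⟨h1, h2⟩ := card_pruned_bounds hd hℓ q i
    exact ⟨h1, by omega⟩
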